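/- On (ℝ², d*), the modulus of noncompact convexity with respect to the Hausdorff measure of noncompactness χ satisfies Δ_{ℝ²,χ}(ε) = ε for every ε ∈ (0, 1], where Δ_{ℝ²,χ}(ε) = inf{1 − d*((0,0), A) : A a nonempty closed convex subset of the closed unit ball B̄((0,0),1) with χ(A) ≥ ε} and d*((0,0),A) = inf{d*((0,0),v) : v ∈ A}. -/

import Mathlib

/-- The river metric on ℝ². -/
noncomputable def riverDist (u v : ℝ × ℝ) : ℝ :=
  if u.1 = v.1 then |u.2 - v.2| else |u.2| + |v.2| + |u.1 - v.1|

/-- The metric segment between two points of ℝ² with the river metric. -/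
def riverSegment (u v : ℝ × ℝ) : Set (ℝ × ℝ) :=
  {z | riverDist u z + riverDist z v = riverDist u v}

/-- A set is convex (w.r.t. the river metric) if it contains all metric segments
between its points. -/
def IsRiverConvex (K : Set (ℝ × ℝ)) : Prop :=
  ∀ u ∈ K, ∀ v ∈ K, riverSegment u v ⊆ K

/-- `m` is a midpoint of `u` and `v` for the river metric. -/
def IsRiverMidpoint (u v m : ℝ × ℝ) : Prop :=
  riverDist u m = riverDist u v / 2 ∧ riverDist m v = riverDist u v / 2

/-- The river diameter of a set. -/
noncomputable def riverDiam (D : Set (ℝ × ℝ)) : ℝ :=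
  sSup {r : ℝ | ∃ u ∈ D, ∃ v ∈ D, riverDist u v = r}

/-- `A` is closed for the topology of the river metric. -/
def IsRiverClosed (A : Set (ℝ × ℝ)) : Prop :=
  ∀ p : ℝ × ℝ, p ∉ A → ∃ r > (0:ℝ), ∀ q ∈ A, r ≤ riverDist p q

/-- Distance from a point to a set, for the river metric. -/
noncomputable def riverDistToSet (p : ℝ × ℝ) (A : Set (ℝ × ℝ)) : ℝ :=
  sInf {d : ℝ | ∃ v ∈ A, riverDist p v = d}

/-- The closed unit ball around the origin for the river metric. -/
def riverClosedUnitBall : Set (ℝ × ℝ) :=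
  {v : ℝ × ℝ | riverDist v (0, 0) ≤ 1}

/-- The Hausdorff measure of noncompactness for the river metric. -/
noncomputable def hausdorffMNC (D : Set (ℝ × ℝ)) : ℝ :=
  sInf {ε : ℝ | 0 < ε ∧ ∃ c : Finset (ℝ × ℝ),
    D ⊆ ⋃ p ∈ c, {v : ℝ × ℝ | riverDist p v ≤ ε}}

/-- The modulus of noncompact convexity of (ℝ², d*) with respect to the
Hausdorff measure of noncompactness. -/
noncomputable def riverDeltaChi (ε : ℝ) : ℝ :=
  sInf {t : ℝ | ∃ A : Set (ℝ × ℝ), A.Nonempty ∧ A ⊆ riverClosedUnitBall ∧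
    IsRiverClosed A ∧ IsRiverConvex A ∧ ε ≤ hausdorffMNC A ∧
    t = 1 - riverDistToSet (0, 0) A}

/-!
A metric segment between points with different abscissae descends from each endpoint to the river
`{y = 0}`. Hence a convex set `A` is either vertical, so that its measure of noncompactness is `0`,
or it contains the foot `(x, 0)` of each of its points `(x, y)`. In the second case
`d*(0, A) ≤ |x|`, so `A ⊆ B̄(0, 1)` forces `|y| ≤ 1 - |x| ≤ 1 - d*(0, A)`; since bounded pieces of
the river are totally bounded, `χ(A) ≤ 1 - d*(0, A)`. Equality holds for the part of the ball over
`x ≥ 1 - ε`: it contains infinitely many vertical hairs of height `h` for each `h < ε`, and a ball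
of radius less than `h` reaches the tip of at most one of them.
-/

open Set

section Metric

variable (u v w : ℝ × ℝ)

lemma riverDist_of_fst_eq {u v : ℝ × ℝ} (h : u.1 = v.1) : riverDist u v = |u.2 - v.2| :=
  if_pos h

lemma riverDist_of_fst_ne {u v : ℝ × ℝ} (h : u.1 ≠ v.1) :
    riverDist u v = |u.2| + |v.2| + |u.1 - v.1| :=
  if_neg h

lemma riverDist_nonneg : 0 ≤ riverDist u v := by
  unfold riverDist
  split_ifs <;> positivity

lemma riverDist_comm : riverDist u v = riverDist v u := by
  by_cases h : u.1 = v.1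
  · rw [riverDist_of_fst_eq h, riverDist_of_fst_eq h.symm, abs_sub_comm]
  · rw [riverDist_of_fst_ne h, riverDist_of_fst_ne (Ne.symm h), abs_sub_comm, add_comm |u.2|]

lemma riverDist_triangle : riverDist u w ≤ riverDist u v + riverDist v w := by
  by_cases huv : u.1 = v.1 <;> by_cases hvw : v.1 = w.1
  · simpa only [riverDist, if_pos huv, if_pos hvw, if_pos (huv.trans hvw)] using
      abs_sub_le u.2 v.2 w.2
  · rw [riverDist_of_fst_eq huv, riverDist_of_fst_ne hvw, riverDist_of_fst_ne (huv ▸ hvw), huv]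
    linarith [abs_sub_abs_le_abs_sub u.2 v.2]
  · rw [riverDist_of_fst_ne huv, riverDist_of_fst_eq hvw, riverDist_of_fst_ne (hvw ▸ huv), hvw]
    linarith [abs_sub_abs_le_abs_sub w.2 v.2, abs_sub_comm w.2 v.2]
  rw [riverDist_of_fst_ne huv, riverDist_of_fst_ne hvw]
  by_cases huw : u.1 = w.1
  · rw [riverDist_of_fst_eq huw]
    linarith [abs_sub u.2 w.2, abs_nonneg v.2, abs_nonneg (u.1 - v.1), abs_nonneg (v.1 - w.1)]
  · rw [riverDist_of_fst_ne huw]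
    linarith [abs_sub_le u.1 v.1 w.1, abs_nonneg v.2]

lemma riverDist_origin_right : riverDist v (0, 0) = |v.1| + |v.2| := by
  by_cases h : v.1 = 0
  · simp [riverDist_of_fst_eq (v := (0, 0)) h, h]
  · simp [riverDist_of_fst_ne (v := (0, 0)) h, add_comm]

lemma riverDist_origin_left : riverDist (0, 0) v = |v.1| + |v.2| := by
  rw [riverDist_comm, riverDist_origin_right]

lemma riverDist_foot_left : riverDist (v.1, 0) v = |v.2| := by
  simp [riverDist]

lemma riverDist_mk_zero_mk_zero (x x' : ℝ) : riverDist (x, 0) (x', 0) = |x - x'| := by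
  by_cases h : x = x' <;> simp [riverDist, h]

lemma abs_fst_sub_fst_le_riverDist : |u.1 - v.1| ≤ riverDist u v := by
  by_cases h : u.1 = v.1
  · simpa [h] using riverDist_nonneg u v
  · rw [riverDist_of_fst_ne h]
    exact le_add_of_nonneg_left (by positivity)

lemma abs_snd_le_riverDist {u v : ℝ × ℝ} (h : u.1 ≠ v.1) : |v.2| ≤ riverDist u v := by
  rw [riverDist_of_fst_ne h]
  linarith [abs_nonneg u.2, abs_nonneg (u.1 - v.1)]

end Metric

section DistToSet

variable {p v : ℝ × ℝ} {A : Set (ℝ × ℝ)} {d : ℝ}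

lemma riverDistToSet_le (hv : v ∈ A) : riverDistToSet p A ≤ riverDist p v :=
  csInf_le ⟨0, by rintro _ ⟨w, -, rfl⟩; exact riverDist_nonneg p w⟩ ⟨v, hv, rfl⟩

lemma le_riverDistToSet (hA : A.Nonempty) (h : ∀ v ∈ A, d ≤ riverDist p v) :
    d ≤ riverDistToSet p A := by
  obtain ⟨u, hu⟩ := hA
  refine le_csInf ⟨_, u, hu, rfl⟩ ?_
  rintro _ ⟨v, hv, rfl⟩
  exact h v hv

end DistToSet

section Closed

lemma IsRiverClosed.inter {A B : Set (ℝ × ℝ)} (hA : IsRiverClosed A) (hB : IsRiverClosed B) :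
    IsRiverClosed (A ∩ B) := by
  intro p hp
  by_cases hpA : p ∈ A
  · obtain ⟨r, hr, hrB⟩ := hB p fun hpB => hp ⟨hpA, hpB⟩
    exact ⟨r, hr, fun q hq => hrB q hq.2⟩
  · obtain ⟨r, hr, hrA⟩ := hA p hpA
    exact ⟨r, hr, fun q hq => hrA q hq.1⟩

lemma isRiverClosed_setOf_le {f : ℝ × ℝ → ℝ} (hf : ∀ p q, f p ≤ riverDist p q + f q) (c : ℝ) :
    IsRiverClosed {v | f v ≤ c} := by
  intro p hp
  refine ⟨f p - c, sub_pos.mpr (not_le.mp hp), fun q (hq : f q ≤ c) => ?_⟩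
  linarith [hf p q]

lemma isRiverClosed_setOf_le_fst (a : ℝ) : IsRiverClosed {v | a ≤ v.1} := by
  have h := isRiverClosed_setOf_le (f := fun v => -v.1)
    (fun p q => by linarith [neg_abs_le (p.1 - q.1), abs_fst_sub_fst_le_riverDist p q]) (-a)
  simpa only [neg_le_neg_iff] using h

lemma isRiverClosed_closedBall (p : ℝ × ℝ) (R : ℝ) : IsRiverClosed {v | riverDist v p ≤ R} :=
  isRiverClosed_setOf_le (fun u v => riverDist_triangle u v p) R

end Closed

section Convex

lemma mem_uIcc_of_abs_sub_add_abs_sub_eq {a b c : ℝ} (h : |a - b| + |b - c| = |a - c|) :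
    b ∈ uIcc a c := by
  rw [← segment_eq_uIcc, mem_segment_iff_wbtw, ← dist_add_dist_eq_iff]
  exact h

lemma abs_le_max_abs_abs_of_mem_uIcc {a b c : ℝ} (h : b ∈ uIcc a c) : |b| ≤ max |a| |c| :=
  abs_le.mpr <|
    uIcc_subset_Icc (abs_le.mp (le_max_left _ _)) (abs_le.mp (le_max_right _ _)) h

variable {u v z : ℝ × ℝ}

lemma fst_eq_and_abs_snd_le_of_mem_riverSegment (huv : u.1 = v.1) (hz : z ∈ riverSegment u v) :
    z.1 = u.1 ∧ (|z.2| ≤ |u.2| ∨ |z.2| ≤ |v.2|) := by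
  simp only [riverSegment, mem_ofPred_eq, riverDist_of_fst_eq huv] at hz
  have huz : z.1 = u.1 := by
    by_contra hne
    rw [riverDist_of_fst_ne (Ne.symm hne), riverDist_of_fst_ne (huv ▸ hne)] at hz
    have hpos : 0 < |u.1 - z.1| := abs_pos.mpr (sub_ne_zero.mpr (Ne.symm hne))
    linarith [abs_sub u.2 v.2, abs_nonneg z.2, abs_nonneg (z.1 - v.1)]
  rw [riverDist_of_fst_eq huz.symm, riverDist_of_fst_eq (huz.trans huv)] at hz
  have hbetween : z.2 ∈ uIcc u.2 v.2 := mem_uIcc_of_abs_sub_add_abs_sub_eq hz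
  exact ⟨huz, le_max_iff.mp (abs_le_max_abs_abs_of_mem_uIcc hbetween)⟩

lemma mem_riverSegment_cases (hz : z ∈ riverSegment u v) :
    (z.1 = u.1 ∧ |z.2| ≤ |u.2|) ∨ (z.1 = v.1 ∧ |z.2| ≤ |v.2|) ∨
      (z.1 ∈ uIcc u.1 v.1 ∧ z.2 = 0) := by
  by_cases huv : u.1 = v.1
  · obtain ⟨hzu, hle | hle⟩ := fst_eq_and_abs_snd_le_of_mem_riverSegment huv hz
    · exact .inl ⟨hzu, hle⟩
    · exact .inr (.inl ⟨hzu.trans huv, hle⟩)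
  simp only [riverSegment, mem_ofPred_eq, riverDist_of_fst_ne huv] at hz
  by_cases hzu : z.1 = u.1
  · rw [riverDist_of_fst_eq hzu.symm, riverDist_of_fst_ne (hzu ▸ huv), hzu] at hz
    exact .inl ⟨hzu, by linarith [abs_nonneg (u.2 - z.2)]⟩
  by_cases hzv : z.1 = v.1
  · rw [riverDist_of_fst_eq hzv, riverDist_of_fst_ne (Ne.symm hzu), hzv] at hz
    exact .inr (.inl ⟨hzv, by linarith [abs_nonneg (z.2 - v.2)]⟩)
  rw [riverDist_of_fst_ne (Ne.symm hzu), riverDist_of_fst_ne hzv] at hz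
  have hz0 : z.2 = 0 := abs_nonpos_iff.mp (by linarith [abs_sub_le u.1 z.1 v.1, abs_nonneg z.2])
  have hbetween : |u.1 - z.1| + |z.1 - v.1| = |u.1 - v.1| := by
    rw [hz0, abs_zero] at hz
    linarith
  exact .inr (.inr ⟨mem_uIcc_of_abs_sub_add_abs_sub_eq hbetween, hz0⟩)

lemma foot_mem_riverSegment (huv : u.1 ≠ v.1) : (u.1, 0) ∈ riverSegment u v := by
  rw [riverSegment, mem_ofPred_eq, riverDist_comm, riverDist_foot_left, riverDist_of_fst_ne huv,
    riverDist_of_fst_ne (u := (u.1, 0)) huv, abs_zero]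
  ring

lemma IsRiverConvex.inter {K L : Set (ℝ × ℝ)} (hK : IsRiverConvex K) (hL : IsRiverConvex L) :
    IsRiverConvex (K ∩ L) :=
  fun u hu v hv => subset_inter (hK u hu.1 v hv.1) (hL u hu.2 v hv.2)

lemma isRiverConvex_setOf_le_fst (a : ℝ) : IsRiverConvex {v | a ≤ v.1} := by
  intro u (hu : a ≤ u.1) v (hv : a ≤ v.1) z hz
  rcases mem_riverSegment_cases hz with ⟨h, -⟩ | ⟨h, -⟩ | ⟨h, -⟩
  · exact hu.trans_eq h.symm
  · exact hv.trans_eq h.symm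
  · exact (le_inf hu hv).trans h.1

lemma isRiverConvex_closedBall_origin (R : ℝ) : IsRiverConvex {v | riverDist v (0, 0) ≤ R} := by
  intro u hu v hv z hz
  rw [mem_ofPred_eq, riverDist_origin_right] at *
  rcases mem_riverSegment_cases hz with ⟨h, hle⟩ | ⟨h, hle⟩ | ⟨h, h0⟩
  · rw [h]; linarith
  · rw [h]; linarith
  · rw [h0, abs_zero, add_zero]
    refine (abs_le_max_abs_abs_of_mem_uIcc h).trans (max_le ?_ ?_)
    · linarith [abs_nonneg u.2]
    · linarith [abs_nonneg v.2]

end Convex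

section HausdorffMNC

variable {D : Set (ℝ × ℝ)} {R h : ℝ}

lemma hausdorffMNC_le {r : ℝ} (hr : 0 < r) (c : Finset (ℝ × ℝ))
    (hc : ∀ v ∈ D, ∃ p ∈ c, riverDist p v ≤ r) : hausdorffMNC D ≤ r := by
  refine csInf_le ⟨0, fun _ hx => hx.1.le⟩ ⟨hr, c, fun v hv => ?_⟩
  simpa only [mem_iUnion, exists_prop, mem_ofPred_eq] using hc v hv

lemma hausdorffMNC_le_of_totallyBounded {X : Type*} [PseudoMetricSpace X] {S : Set X}
    (hS : TotallyBounded S) {f : X → ℝ × ℝ} (hf : ∀ s t, riverDist (f s) (f t) ≤ dist s t)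
    (hh : 0 ≤ h) (hD : ∀ v ∈ D, ∃ s ∈ S, riverDist (f s) v ≤ h) : hausdorffMNC D ≤ h := by
  classical
  refine le_of_forall_pos_le_add fun δ hδ => ?_
  obtain ⟨t, ht, hcover⟩ := Metric.totallyBounded_iff.mp hS δ hδ
  refine hausdorffMNC_le (by positivity) (ht.toFinset.image f) fun v hv => ?_
  obtain ⟨s, hs, hsv⟩ := hD v hv
  obtain ⟨c, hc, hsc⟩ := mem_iUnion₂.mp (hcover hs)
  refine ⟨f c, Finset.mem_image_of_mem f (ht.mem_toFinset.mpr hc), ?_⟩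
  calc riverDist (f c) v ≤ riverDist (f c) (f s) + riverDist (f s) v := riverDist_triangle _ _ _
    _ ≤ dist c s + h := add_le_add (hf c s) hsv
    _ ≤ h + δ := by linarith [Metric.mem_ball'.mp hsc]

lemma hausdorffMNC_le_zero_of_fst_eq {a : ℝ} (hfst : ∀ v ∈ D, v.1 = a)
    (hR : ∀ v ∈ D, |v.2| ≤ R) : hausdorffMNC D ≤ 0 := by
  refine hausdorffMNC_le_of_totallyBounded (totallyBounded_Icc (-R) R) (f := fun y => (a, y))
    (fun y y' => ?_) le_rfl fun v hv => ⟨v.2, abs_le.mp (hR v hv), ?_⟩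
  · exact (riverDist_of_fst_eq (u := (a, y)) (v := (a, y')) rfl).le
  · simp [riverDist, hfst v hv]

lemma hausdorffMNC_le_of_abs_snd_le (hh : 0 ≤ h) (hR : ∀ v ∈ D, |v.1| ≤ R)
    (hD : ∀ v ∈ D, |v.2| ≤ h) : hausdorffMNC D ≤ h :=
  hausdorffMNC_le_of_totallyBounded (totallyBounded_Icc (-R) R) (f := fun x => (x, 0))
    (fun x x' => (riverDist_mk_zero_mk_zero x x').le) hh
    fun v hv => ⟨v.1, abs_le.mp (hR v hv), (riverDist_foot_left v).trans_le (hD v hv)⟩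

lemma le_hausdorffMNC_of_infinite (hR : ∀ v ∈ D, riverDist v (0, 0) ≤ R)
    (hinf : (Prod.fst '' {v ∈ D | h ≤ |v.2|}).Infinite) : h ≤ hausdorffMNC D := by
  classical
  refine le_csInf ⟨max R 1, by positivity, {(0, 0)}, fun v hv => ?_⟩ ?_
  · simpa [riverDist_comm (0, 0)] using Or.inl (hR v hv)
  rintro r ⟨-, c, hc⟩
  obtain ⟨_, ⟨v, ⟨hv, hle⟩, rfl⟩, hfst⟩ := hinf.exists_notMem_finset (c.image Prod.fst)
  obtain ⟨p, hp, hpv⟩ := mem_iUnion₂.mp (hc hv)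
  have hne : p.1 ≠ v.1 := fun heq => hfst (Finset.mem_image.mpr ⟨p, hp, heq⟩)
  exact hle.trans ((abs_snd_le_riverDist hne).trans hpv)

end HausdorffMNC

lemma IsRiverConvex.hausdorffMNC_le_sub_riverDistToSet {A : Set (ℝ × ℝ)} {R : ℝ}
    (hA : IsRiverConvex A) (hne : A.Nonempty) (hR : ∀ v ∈ A, riverDist v (0, 0) ≤ R) :
    hausdorffMNC A ≤ R - riverDistToSet (0, 0) A := by
  simp only [riverDist_origin_right] at hR
  obtain ⟨u, hu⟩ := hne
  have hnonneg : 0 ≤ R - riverDistToSet (0, 0) A :=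
    sub_nonneg.mpr ((riverDistToSet_le hu).trans ((riverDist_origin_left u).trans_le (hR u hu)))
  by_cases hvert : ∀ v ∈ A, v.1 = u.1
  · have hsnd : ∀ v ∈ A, |v.2| ≤ R := fun v hv => by linarith [hR v hv, abs_nonneg v.1]
    exact (hausdorffMNC_le_zero_of_fst_eq hvert hsnd).trans hnonneg
  push Not at hvert
  obtain ⟨w, hw, hwu⟩ := hvert
  have hfoot : ∀ v ∈ A, (v.1, 0) ∈ A := fun v hv => by
    by_cases h : v.1 = u.1
    · exact hA v hv w hw (foot_mem_riverSegment (h.trans_ne hwu.symm))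
    · exact hA v hv u hu (foot_mem_riverSegment h)
  have hdist : ∀ v ∈ A, riverDistToSet (0, 0) A ≤ |v.1| := fun v hv => by
    simpa [riverDist_origin_left] using riverDistToSet_le (p := (0, 0)) (hfoot v hv)
  exact hausdorffMNC_le_of_abs_snd_le (R := R) hnonneg
    (fun v hv => by linarith [hR v hv, abs_nonneg v.2])
    (fun v hv => by linarith [hR v hv, hdist v hv])

/-- The part of the closed unit ball lying over `x ≥ 1 - ε`, which attains the infimum defining
`riverDeltaChi ε`. -/
def riverCap (ε : ℝ) : Set (ℝ × ℝ) :=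
  {v | 1 - ε ≤ v.1} ∩ riverClosedUnitBall

section Cap

variable {ε : ℝ}

lemma mk_mem_riverCap {x y : ℝ} (hx0 : 0 ≤ x) (hx : 1 - ε ≤ x) (hxy : x + |y| ≤ 1) :
    (x, y) ∈ riverCap ε :=
  ⟨hx, by rwa [riverClosedUnitBall, mem_ofPred_eq, riverDist_origin_right, abs_of_nonneg hx0]⟩

lemma isRiverClosed_riverCap (ε : ℝ) : IsRiverClosed (riverCap ε) :=
  (isRiverClosed_setOf_le_fst _).inter (isRiverClosed_closedBall _ _)

lemma isRiverConvex_riverCap (ε : ℝ) : IsRiverConvex (riverCap ε) :=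
  (isRiverConvex_setOf_le_fst _).inter (isRiverConvex_closedBall_origin _)

lemma le_hausdorffMNC_riverCap (h0 : 0 < ε) (h1 : ε ≤ 1) : ε ≤ hausdorffMNC (riverCap ε) := by
  refine le_of_forall_lt_imp_le_of_dense fun h hh => ?_
  have hIoo : (Ioo (1 - ε) (min 1 (1 - h))).Infinite :=
    Ioo_infinite (lt_min (by linarith) (by linarith))
  refine le_hausdorffMNC_of_infinite (fun v hv => hv.2) (hIoo.mono ?_)
  rintro x ⟨hεx, hx⟩
  obtain ⟨hx1, hxh⟩ := lt_min_iff.mp hx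
  have habs : |1 - x| = 1 - x := abs_of_pos (by linarith)
  have htip : (x, 1 - x) ∈ riverCap ε := mk_mem_riverCap (by linarith) hεx.le (by simp [habs])
  exact ⟨(x, 1 - x), ⟨htip, by rw [habs]; linarith⟩, rfl⟩

lemma riverDistToSet_origin_riverCap (h0 : 0 ≤ ε) (h1 : ε ≤ 1) :
    riverDistToSet (0, 0) (riverCap ε) = 1 - ε := by
  have hmem : (1 - ε, 0) ∈ riverCap ε := mk_mem_riverCap (by linarith) le_rfl (by simpa)
  apply le_antisymm
  · have hdist : riverDist (0, 0) (1 - ε, 0) = 1 - ε := by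
      simp [riverDist_mk_zero_mk_zero, abs_of_nonpos, h1]
    exact (riverDistToSet_le hmem).trans_eq hdist
  · refine le_riverDistToSet ⟨_, hmem⟩ fun v hv => ?_
    rw [riverDist_origin_left]
    linarith [hv.1.out, le_abs_self v.1, abs_nonneg v.2]

end Cap

theorem river_modulus_hausdorff (ε : ℝ) (h0 : 0 < ε) (h1 : ε ≤ 1) :
    riverDeltaChi ε = ε := by
  refine IsLeast.csInf_eq ⟨?_, ?_⟩
  · have hne : (riverCap ε).Nonempty :=
      ⟨(1 - ε, 0), mk_mem_riverCap (by linarith) le_rfl (by simpa using h0.le)⟩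
    refine ⟨riverCap ε, hne, inter_subset_right, isRiverClosed_riverCap ε,
      isRiverConvex_riverCap ε, le_hausdorffMNC_riverCap h0 h1, ?_⟩
    rw [riverDistToSet_origin_riverCap h0.le h1, sub_sub_cancel]
  · rintro _ ⟨A, hne, hball, -, hconv, hmnc, rfl⟩
    exact hmnc.trans (hconv.hausdorffMNC_le_sub_riverDistToSet hne hball)
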